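/- In the HCPP instance I_φ=(G,ω,𝒫,≺) produced by the construction from a 3-CNF formula φ, the multigraph ⟨G⟩E_0 induced by the edge class E_0 is Eulerian: it is connected and it is the union of pairwise edge-disjoint cycles, so every vertex of ⟨G⟩E_0 is balanced. -/

import Mathlib

namespace HCPPFormal

variable {V : Type} [DecidableEq V]

/-- The degree of a vertex in a multigraph given as a multiset of edges
(loops count twice, multiplicities are counted). -/
def mDeg (M : Multiset (Sym2 V)) (v : V) : ℕ :=
  (M.map fun e => if e = Sym2.diag v then 2 else if v ∈ e then 1 else 0).sum

/-- The vertex set of the multigraph induced by a multiset of edges. -/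
def mVerts (M : Multiset (Sym2 V)) : Set V := {v | ∃ e ∈ M, v ∈ e}

/-- Adjacency in the multigraph induced by a multiset of edges. -/
def mAdj (M : Multiset (Sym2 V)) (a b : V) : Prop := s(a, b) ∈ M

/-- The multigraph induced by a multiset of edges is connected. -/
def mConnected (M : Multiset (Sym2 V)) : Prop :=
  ∀ u ∈ mVerts M, ∀ v ∈ mVerts M, Relation.ReflTransGen (mAdj M) u v

/-- The list of edges traversed by a walk, given as its list of vertices. -/
def walkEdgeList (w : List V) : List (Sym2 V) :=
  (w.zip w.tail).map fun p => s(p.1, p.2)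

/-- The multiset of edges traversed by a walk (with multiplicities). -/
def walkEdges (w : List V) : Multiset (Sym2 V) :=
  (walkEdgeList w : Multiset (Sym2 V))

/-- The weight of a multiset of edges. -/
def mWeight (ω : Sym2 V → ℕ) (M : Multiset (Sym2 V)) : ℕ := (M.map ω).sum

/-- The weight of a walk. -/
def wWeight (ω : Sym2 V → ℕ) (w : List V) : ℕ := mWeight ω (walkEdges w)

/-- A multiset `M` of edges is a perfect matching on the vertex set `U`:
it is a set of pairwise vertex-disjoint non-loop edges
whose endpoints are exactly the vertices of `U`. -/
def IsPerfectMatchingOn (M : Multiset (Sym2 V)) (U : Set V) : Prop :=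
  M.Nodup ∧ (∀ e ∈ M, ¬ e.IsDiag) ∧
  (∀ e ∈ M, ∀ e' ∈ M, e ≠ e' → ∀ v : V, v ∈ e → v ∉ e') ∧
  mVerts M = U



/-- Vertices of the graph constructed from a 3-CNF formula:
`t i l`, `z i l`, `f i l` are the vertices `t_i^ℓ`, `z_i^ℓ`, `f_i^ℓ`;
`cs` is the vertex `c*`; `c1 j`, `c2 j` are `c_j¹`, `c_j²`;
`a i j`, `b i j` are the auxiliary vertices `a_{ij}`, `b_{ij}`. -/
inductive V3 : Type where
  | t (i l : ℕ) : V3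
  | z (i l : ℕ) : V3
  | f (i l : ℕ) : V3
  | cs : V3
  | c1 (j : ℕ) : V3
  | c2 (j : ℕ) : V3
  | a (i j : ℕ) : V3
  | b (i j : ℕ) : V3
deriving DecidableEq

/-- A 3-CNF formula with variables `0, …, n-1` and clauses `0, …, m-1`;
the pair `(i, true)` represents the literal `x_i` and `(i, false)` represents `¬x_i`.
Each clause has at most three literals, and no clause contains
both a variable and its negation. -/
structure CNF3 : Type where
  n : ℕ
  m : ℕ
  clause : ℕ → Finset (ℕ × Bool)
  size_le : ∀ j < m, (clause j).card ≤ 3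
  var_lt : ∀ j < m, ∀ p ∈ clause j, p.1 < n
  no_taut : ∀ j < m, ∀ i : ℕ, ¬ ((i, true) ∈ clause j ∧ (i, false) ∈ clause j)

/-- The clauses containing the variable `x_i` (positively or negatively). -/
def occ (φ : CNF3) (i : ℕ) : Finset ℕ :=
  (Finset.range φ.m).filter fun j => (i, true) ∈ φ.clause j ∨ (i, false) ∈ φ.clause j

/-- `μ φ i` is the number of clauses containing `x_i` or `¬x_i`. -/
def μ (φ : CNF3) (i : ℕ) : ℕ := (occ φ i).card

/-- `posOf φ i j` is the (1-based) position `ℓ` such that clause `j` is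
the `ℓ`-th clause containing `x_i` or `¬x_i`. -/
def posOf (φ : CNF3) (i j : ℕ) : ℕ := ((occ φ i).filter fun j' => j' ≤ j).card

/-- The edges of the cycle `X_i`. -/
def Xedges (φ : CNF3) (i : ℕ) : Finset (Sym2 V3) :=
  ((Finset.Ico 1 (6 * μ φ i)).image fun l => s(V3.t i l, V3.t i (l + 1))) ∪
  ((Finset.Ico 1 (6 * μ φ i)).image fun l => s(V3.f i l, V3.f i (l + 1))) ∪
  {s(V3.t i (6 * μ φ i), V3.f i (6 * μ φ i)), s(V3.f i 1, V3.t i 1)}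

/-- The edges of the cycle `Y_{i i'}` where `i' = (i mod n) + 1` (0-based: `(i+1) % n`). -/
def Yedges (φ : CNF3) (i : ℕ) : Finset (Sym2 V3) :=
  {s(V3.t i (6 * μ φ i), V3.f ((i + 1) % φ.n) 1),
   s(V3.f ((i + 1) % φ.n) 1, V3.f i (6 * μ φ i)),
   s(V3.f i (6 * μ φ i), V3.t ((i + 1) % φ.n) 1),
   s(V3.t ((i + 1) % φ.n) 1, V3.t i (6 * μ φ i))}

/-- The edges of the cycle `Z_{ij}` (for a positive occurrence of `x_i` in clause `C_j`). -/
def Zedges (φ : CNF3) (i j : ℕ) : Finset (Sym2 V3) :=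
  {s(V3.t i (6 * posOf φ i j - 3), V3.c1 j),
   s(V3.c1 j, V3.a i j),
   s(V3.a i j, V3.c2 j),
   s(V3.c2 j, V3.t i (6 * posOf φ i j - 2)),
   s(V3.t i (6 * posOf φ i j - 2), V3.b i j),
   s(V3.b i j, V3.t i (6 * posOf φ i j - 3))}

/-- The edges of the cycle `Z̄_{ij}` (for a negative occurrence of `¬x_i` in clause `C_j`). -/
def Zbedges (φ : CNF3) (i j : ℕ) : Finset (Sym2 V3) :=
  {s(V3.f i (6 * posOf φ i j - 3), V3.c1 j),
   s(V3.c1 j, V3.a i j),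
   s(V3.a i j, V3.c2 j),
   s(V3.c2 j, V3.f i (6 * posOf φ i j - 2)),
   s(V3.f i (6 * posOf φ i j - 2), V3.b i j),
   s(V3.b i j, V3.f i (6 * posOf φ i j - 3))}

/-- The edge class `E_0`: all edges of all cycles `X_i`, `Y_{ii'}`, `Z_{ij}`, `Z̄_{ij}`. -/
def E0 (φ : CNF3) : Finset (Sym2 V3) :=
  ((Finset.range φ.n).biUnion fun i => Xedges φ i) ∪
  ((Finset.range φ.n).biUnion fun i => Yedges φ i) ∪
  ((Finset.range φ.m).biUnion fun j =>
    (φ.clause j).biUnion fun p => if p.2 then Zedges φ p.1 j else Zbedges φ p.1 j)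

/-- The edge class `E_i^ℓ`: the edges of the path `P_i^ℓ = (t_i^ℓ, z_i^ℓ, f_i^ℓ)`. -/
def Epl (φ : CNF3) (i l : ℕ) : Finset (Sym2 V3) :=
  {s(V3.t i l, V3.z i l), s(V3.z i l, V3.f i l)}

/-- The edge class `E*`: all edges incident to `c*`,
i.e. the edges of the paths `(c_j¹, c*, c_j²)`. -/
def Estar (φ : CNF3) : Finset (Sym2 V3) :=
  (Finset.range φ.m).biUnion fun j => {s(V3.c1 j, V3.cs), s(V3.cs, V3.c2 j)}

/-- All edges of the constructed graph `G`. -/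
def Eall (φ : CNF3) : Finset (Sym2 V3) :=
  E0 φ ∪ Estar φ ∪
  ((Finset.range φ.n).biUnion fun i => (Finset.Icc 1 (6 * μ φ i)).biUnion fun l => Epl φ i l)

/-- The vertex set `V_FT` of all vertices `t_i^ℓ` and `f_i^ℓ`. -/
def VFT (φ : CNF3) : Set V3 :=
  {v | ∃ i < φ.n, ∃ l : ℕ, 1 ≤ l ∧ l ≤ 6 * μ φ i ∧ (v = V3.t i l ∨ v = V3.f i l)}

/-- The vertex set `V_C` of all vertices `c_j¹` and `c_j²`. -/
def VC (φ : CNF3) : Set V3 :=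
  {v | ∃ j < φ.m, v = V3.c1 j ∨ v = V3.c2 j}


/-- A multiset of edges forms a cycle: it is the edge multiset of a closed walk
with at least three edges whose vertices, apart from the coinciding first and
last vertex, are pairwise distinct. -/
def IsCycleEdgeSet (M : Multiset (Sym2 V)) : Prop :=
  ∃ w : List V, 4 ≤ w.length ∧ w.head? = w.getLast? ∧ w.tail.Nodup ∧ walkEdges w = M

/-!
Each of the closed walks `X_i`, `Y_{ii'}`, `Z_{ij}`, `Z̄_{ij}` is a simple cycle. These cycles are
pairwise edge-disjoint: the edges of `Z`-cycles are exactly those with an endpoint indexed by a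
clause, and there the clause and the variable identify the cycle; an edge of `X_i` stays within the
variable `x_i` and changes the superscript by at most `1`, whereas an edge of `Y_{ii'}` joins
superscript `6μ_i ≥ 6` of `x_i` to superscript `1`. So `E_0` is a sum of cycles, and all degrees are
even because each cycle contributes `0` or `2` at every vertex. It is connected because `Y_{ii'}`
links `X_i` to `X_{i'}` and every `Z`-cycle meets some `X_i`.
-/

section Walks

omit [DecidableEq V]

@[simp] lemma walkEdges_singleton (a : V) : walkEdges [a] = 0 := rfl

@[simp] lemma walkEdges_cons_cons (a b : V) (w : List V) :
    walkEdges (a :: b :: w) = s(a, b) ::ₘ walkEdges (b :: w) := rfl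

lemma mem_of_mem_walkEdges : ∀ {w : List V} {e : Sym2 V} {v : V}, e ∈ walkEdges w → v ∈ e → v ∈ w
  | [], _, _, he, _ => absurd he (Multiset.notMem_zero _)
  | [_], _, _, he, _ => absurd he (Multiset.notMem_zero _)
  | a :: b :: w, e, v, he, hv => by
    rw [walkEdges_cons_cons, Multiset.mem_cons] at he
    rcases he with rfl | he
    · rcases Sym2.mem_iff.1 hv with rfl | rfl <;> simp
    · exact List.mem_cons_of_mem a (mem_of_mem_walkEdges he hv)

lemma walkEdges_append {x y : V} : ∀ {u v : List V}, u.getLast? = some x → v.head? = some y →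
    walkEdges (u ++ v) = walkEdges u + s(x, y) ::ₘ walkEdges v
  | [], _, hu, _ => by simp at hu
  | _, [], _, hv => by simp at hv
  | [a], b :: v, hu, hv => by
    obtain rfl : a = x := by simpa using hu
    obtain rfl : b = y := by simpa using hv
    simp
  | a :: b :: u, v, hu, hv => by
    have ih := walkEdges_append (u := b :: u) (v := v) (by simpa using hu) hv
    rw [List.cons_append] at ih
    simp [ih, Multiset.cons_swap s(a, b)]

lemma walkEdges_reverse : ∀ w : List V, walkEdges w.reverse = walkEdges w
  | [] => rfl
  | [_] => rfl
  | a :: b :: w => by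
    rw [List.reverse_cons, walkEdges_append (x := b) (y := a) (by simp) rfl,
      walkEdges_reverse (b :: w), walkEdges_cons_cons, walkEdges_singleton, Sym2.eq_swap,
      Multiset.add_cons, add_zero]

lemma walkEdges_map_range' (g : ℕ → V) : ∀ a n : ℕ,
    walkEdges ((List.range' a n).map g) =
      ((List.range' a (n - 1)).map fun l => s(g l, g (l + 1)) : List (Sym2 V))
  | _, 0 => rfl
  | _, 1 => rfl
  | a, n + 2 => by
    have ih := walkEdges_map_range' g (a + 1) (n + 1)
    simp only [Nat.add_sub_cancel, List.range'_succ, List.map_cons] at ih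
    simp [List.range'_succ, ih]

lemma nodup_walkEdges : ∀ {w : List V}, w.Nodup → (walkEdges w).Nodup
  | [], _ => Multiset.nodup_zero
  | [_], _ => Multiset.nodup_zero
  | a :: b :: w, h => by
    have ⟨ha, hw⟩ := List.nodup_cons.1 h
    rw [walkEdges_cons_cons, Multiset.nodup_cons]
    exact ⟨fun he => ha (mem_of_mem_walkEdges he (Sym2.mem_mk_left a b)), nodup_walkEdges hw⟩

/-- In `a, b, c, …, a` the vertex `b` meets only the edges `ab` and `bc`, and `a ≠ c` because the
walk has at least three edges; so `ab` does not recur in the path `b, c, …, a`. -/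
lemma IsCycleEdgeSet.nodup {M : Multiset (Sym2 V)} (hM : IsCycleEdgeSet M) : M.Nodup := by
  obtain ⟨w, hlen, hclosed, hnodup, rfl⟩ := hM
  match w, hlen with
  | a :: b :: c :: d :: w, _ =>
    have ⟨hb, hcd⟩ := List.nodup_cons.1 hnodup
    have hc : c ∉ d :: w := (List.nodup_cons.1 hcd).1
    have ha : a ∈ d :: w := List.mem_of_getLast? (by simpa using hclosed.symm)
    have hac : a ≠ c := fun h => hc (h ▸ ha)
    have hab : a ≠ b := fun h => hb (h ▸ List.mem_cons_of_mem c ha)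
    rw [walkEdges_cons_cons, Multiset.nodup_cons]
    refine ⟨fun he => ?_, nodup_walkEdges hnodup⟩
    rw [walkEdges_cons_cons, Multiset.mem_cons] at he
    rcases he with he | he
    · rcases Sym2.eq_iff.1 he with ⟨h, -⟩ | ⟨h, -⟩
      exacts [hab h, hac h]
    · exact hb (mem_of_mem_walkEdges he (Sym2.mem_mk_right a b))

lemma mConnected_of_forall_reflTransGen {M : Multiset (Sym2 V)} (r : V)
    (hr : ∀ v ∈ mVerts M, Relation.ReflTransGen (mAdj M) r v) : mConnected M := by
  have : Std.Symm (mAdj M) := ⟨fun x y h => by rwa [mAdj, Sym2.eq_swap]⟩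
  exact fun u hu v hv => (symm (hr u hu)).trans (hr v hv)

lemma reflTransGen_mAdj_mono {M N : Multiset (Sym2 V)} (hMN : M ⊆ N) {u v : V}
    (h : Relation.ReflTransGen (mAdj M) u v) : Relation.ReflTransGen (mAdj N) u v :=
  Relation.ReflTransGen.mono (fun _ _ he => hMN he) _ _ h

lemma reflTransGen_mAdj_walkEdges {v : V} : ∀ {a : V} {w : List V}, v ∈ a :: w →
    Relation.ReflTransGen (mAdj (walkEdges (a :: w))) a v
  | a, [], hv => by
    obtain rfl : v = a := by simpa using hv
    rfl
  | a, b :: w, hv => by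
    rcases List.mem_cons.1 hv with rfl | hv
    · rfl
    · exact Relation.ReflTransGen.head
        (show s(a, b) ∈ s(a, b) ::ₘ walkEdges (b :: w) from Multiset.mem_cons_self _ _)
        (reflTransGen_mAdj_mono (Multiset.subset_cons _ _) (reflTransGen_mAdj_walkEdges hv))

lemma mConnected_walkEdges : ∀ w : List V, mConnected (walkEdges w)
  | [] => fun _ ⟨_, he, _⟩ => absurd he (Multiset.notMem_zero _)
  | a :: _ => mConnected_of_forall_reflTransGen a fun _ ⟨_, he, hv⟩ =>
      reflTransGen_mAdj_walkEdges (mem_of_mem_walkEdges he hv)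

lemma IsCycleEdgeSet.reflTransGen_mAdj {c M : Multiset (Sym2 V)} (hc : IsCycleEdgeSet c)
    (hcM : c ⊆ M) {u v : V} (hu : u ∈ mVerts c) (hv : v ∈ mVerts c) :
    Relation.ReflTransGen (mAdj M) u v := by
  obtain ⟨w, -, -, -, rfl⟩ := hc
  exact reflTransGen_mAdj_mono hcM (mConnected_walkEdges w u hu v hv)

end Walks

lemma isCycleEdgeSet_val_of_toFinset_walkEdges {w : List V} {S : Finset (Sym2 V)}
    (hlen : 4 ≤ w.length) (hclosed : w.head? = w.getLast?) (hnodup : w.tail.Nodup)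
    (hS : (walkEdges w).toFinset = S) : IsCycleEdgeSet S.val := by
  have hw : IsCycleEdgeSet (walkEdges w) := ⟨w, hlen, hclosed, hnodup, rfl⟩
  rwa [← hS, Multiset.toFinset_val, hw.nodup.dedup]

lemma toFinset_walkEdges_ladder (g h : ℕ → V) {n : ℕ} (hn : 0 < n) :
    (walkEdges ([h 1] ++
      ((List.range' 1 n).map g ++ ((List.range' 1 n).map h).reverse))).toFinset =
    ((Finset.Ico 1 n).image fun l => s(g l, g (l + 1))) ∪
      ((Finset.Ico 1 n).image fun l => s(h l, h (l + 1))) ∪ {s(g n, h n), s(h 1, g 1)} := by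
  have hlast (k : ℕ → V) : ((List.range' 1 n).map k).getLast? = some (k n) := by
    simp [List.getLast?_range', hn.ne']
  have hhead : ((List.range' 1 n).map g ++ ((List.range' 1 n).map h).reverse).head? =
      some (g 1) := by
    simp [List.head?_range', hn.ne']
  rw [walkEdges_append (x := h 1) rfl hhead,
    walkEdges_append (hlast g) (List.head?_reverse.trans (hlast h)), walkEdges_reverse,
    walkEdges_map_range', walkEdges_map_range']
  have hIco : 1 + (n - 1) = n := by omega
  ext e
  simp only [walkEdges_singleton, zero_add, Multiset.mem_toFinset, Multiset.mem_cons,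
    Multiset.mem_add, Multiset.mem_coe, List.mem_map, List.mem_range'_1, hIco,
    Finset.mem_union, Finset.mem_image, Finset.mem_Ico, Finset.mem_insert, Finset.mem_singleton]
  simp only [or_assoc, or_comm, or_left_comm]

lemma isCycleEdgeSet_ladder {g h : ℕ → V} (hg : g.Injective) (hh : h.Injective)
    (hgh : ∀ k l, g k ≠ h l) {n : ℕ} (hn : 2 ≤ n) :
    IsCycleEdgeSet (((Finset.Ico 1 n).image fun l => s(g l, g (l + 1))) ∪
      ((Finset.Ico 1 n).image fun l => s(h l, h (l + 1))) ∪ {s(g n, h n), s(h 1, g 1)}).val := by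
  have hpos : 0 < n := by omega
  refine isCycleEdgeSet_val_of_toFinset_walkEdges ?_ ?_ ?_ (toFinset_walkEdges_ladder g h hpos)
  · simp only [List.length_append, List.length_reverse, List.length_map, List.length_range',
      List.length_singleton]
    omega
  · rw [List.getLast?_append, List.getLast?_append, List.getLast?_reverse]
    simp [List.head?_range', hpos.ne']
  · rw [List.singleton_append, List.tail_cons, List.nodup_append', List.nodup_reverse]
    refine ⟨List.Nodup.map hg List.nodup_range', List.Nodup.map hh List.nodup_range', ?_⟩
    simp only [List.disjoint_left, List.mem_map, List.mem_reverse]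
    rintro _ ⟨k, -, rfl⟩ ⟨l, -, hl⟩
    exact hgh k l hl.symm

@[simp] lemma mDeg_zero (v : V) : mDeg 0 v = 0 := rfl

@[simp] lemma mDeg_add (M N : Multiset (Sym2 V)) (v : V) :
    mDeg (M + N) v = mDeg M v + mDeg N v := by
  simp [mDeg]

lemma mDeg_cons (a b : V) (M : Multiset (Sym2 V)) (v : V) :
    mDeg (s(a, b) ::ₘ M) v =
      (if a = v then 1 else 0) + (if b = v then 1 else 0) + mDeg M v := by
  simp only [mDeg, Multiset.map_cons, Multiset.sum_cons, Sym2.diag, Sym2.mem_iff, Sym2.eq_iff]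
  grind

/-- Every vertex of a walk but the last starts an edge, and every vertex but the first ends one. -/
lemma mDeg_walkEdges (v : V) : ∀ w : List V,
    mDeg (walkEdges w) v = w.dropLast.count v + w.tail.count v
  | [] => rfl
  | [_] => rfl
  | a :: b :: w => by
    rw [walkEdges_cons_cons, mDeg_cons, mDeg_walkEdges v (b :: w)]
    simp only [List.dropLast_cons_cons, List.tail_cons, List.count_cons, beq_iff_eq]
    ring

lemma IsCycleEdgeSet.even_mDeg {M : Multiset (Sym2 V)} (hM : IsCycleEdgeSet M) (v : V) :
    Even (mDeg M v) := by
  obtain ⟨w, hlen, hclosed, -, rfl⟩ := hM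
  obtain ⟨a, w, rfl⟩ := List.exists_cons_of_length_pos (by omega : 0 < w.length)
  have hcount : (a :: w).dropLast.count v = w.count v := by
    have hlast : a ∈ (a :: w).getLast? := hclosed ▸ rfl
    have := congrArg (List.count v) (List.dropLast_append_getLast? a hlast)
    rw [List.count_append, List.count_singleton, List.count_cons] at this
    omega
  rw [mDeg_walkEdges, hcount, List.tail_cons]
  exact ⟨_, rfl⟩

/-- The multisets of edges that are sums of cycles, that is, whose multigraphs are unions of
edge-disjoint cycles. -/
def cycleSums (V : Type) : AddSubmonoid (Multiset (Sym2 V)) :=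
  AddSubmonoid.closure {c | IsCycleEdgeSet c}

lemma even_mDeg_of_mem_cycleSums {M : Multiset (Sym2 V)} (hM : M ∈ cycleSums V) (v : V) :
    Even (mDeg M v) := by
  induction hM using AddSubmonoid.closure_induction with
  | mem c hc => exact hc.even_mDeg v
  | zero => simp
  | add M N _ _ hM hN => simpa using hM.add hN

lemma union_val_mem_cycleSums {S T : Finset (Sym2 V)} (hS : S.val ∈ cycleSums V)
    (hT : T.val ∈ cycleSums V) (hST : Disjoint S T) : (S ∪ T).val ∈ cycleSums V := by
  rw [← Finset.disjUnion_eq_union S T hST, Finset.disjUnion_val]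
  exact add_mem hS hT

lemma biUnion_val_mem_cycleSums {ι : Type*} {s : Finset ι} {g : ι → Finset (Sym2 V)}
    (hg : ∀ i ∈ s, (g i).val ∈ cycleSums V) (hs : (s : Set ι).PairwiseDisjoint g) :
    (s.biUnion g).val ∈ cycleSums V := by
  rw [← Finset.disjiUnion_eq_biUnion s g hs, Finset.disjiUnion_val]
  exact multiset_sum_mem _ (by simpa using hg)

lemma pairwiseDisjoint_of_forall_mem_eq {ι α κ : Type*} {s : Set ι} {g : ι → Finset α}
    (k : α → κ) {c : ι → κ} (hc : s.InjOn c) (h : ∀ i ∈ s, ∀ e ∈ g i, k e = c i) :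
    s.PairwiseDisjoint g := fun i hi j hj hij =>
  Finset.disjoint_left.2 fun e hei hej =>
    hij (hc hi hj ((h i hi e hei).symm.trans (h j hj e hej)))

/-- The vertex `t_i^ℓ` for the literal `p = x_i` and `f_i^ℓ` for `p = ¬x_i`. -/
def litVertex (p : ℕ × Bool) (l : ℕ) : V3 := if p.2 then V3.t p.1 l else V3.f p.1 l

/-- The edges of the cycle `Z_{ij}` or `Z̄_{ij}` belonging to the occurrence of the literal `p`,
on the variable `x_i`, in the clause `C_j`. -/
def literalEdges (φ : CNF3) (j : ℕ) (p : ℕ × Bool) : Finset (Sym2 V3) :=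
  {s(litVertex p (6 * posOf φ p.1 j - 3), V3.c1 j),
   s(V3.c1 j, V3.a p.1 j),
   s(V3.a p.1 j, V3.c2 j),
   s(V3.c2 j, litVertex p (6 * posOf φ p.1 j - 2)),
   s(litVertex p (6 * posOf φ p.1 j - 2), V3.b p.1 j),
   s(V3.b p.1 j, litVertex p (6 * posOf φ p.1 j - 3))}

lemma E0_eq_union_literalEdges (φ : CNF3) : E0 φ =
    (Finset.range φ.n).biUnion (Xedges φ) ∪ (Finset.range φ.n).biUnion (Yedges φ) ∪
      (Finset.range φ.m).biUnion fun j => (φ.clause j).biUnion (literalEdges φ j) := by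
  have h : ∀ j p, (if p.2 then Zedges φ p.1 j else Zbedges φ p.1 j) = literalEdges φ j p := by
    rintro j ⟨i, _ | _⟩ <;> rfl
  simp only [E0, h]

lemma mem_occ_of_mem_clause {φ : CNF3} {j : ℕ} (hj : j < φ.m) {p : ℕ × Bool}
    (hp : p ∈ φ.clause j) : j ∈ occ φ p.1 := by
  rcases p with ⟨i, _ | _⟩ <;> simp [occ, hj, hp]

lemma posOf_pos {φ : CNF3} {i j : ℕ} (h : j ∈ occ φ i) : 0 < posOf φ i j :=
  Finset.card_pos.2 ⟨j, by simp [h]⟩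

lemma posOf_le_μ (φ : CNF3) (i j : ℕ) : posOf φ i j ≤ μ φ i :=
  Finset.card_filter_le _ _

lemma fst_injOn_clause {φ : CNF3} {j : ℕ} (hj : j < φ.m) :
    Set.InjOn Prod.fst (φ.clause j : Set (ℕ × Bool)) := by
  have := φ.no_taut j hj
  rintro ⟨i, _ | _⟩ hp ⟨i', _ | _⟩ hq (rfl : i = i') <;> simp_all

/-! ### The cycles of the construction -/

lemma isCycleEdgeSet_Xedges {φ : CNF3} {i : ℕ} (h : 0 < μ φ i) :
    IsCycleEdgeSet (Xedges φ i).val :=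
  isCycleEdgeSet_ladder (g := V3.t i) (h := V3.f i) (fun _ _ => by simp) (fun _ _ => by simp)
    (by simp) (by omega)

lemma isCycleEdgeSet_Yedges (φ : CNF3) (i : ℕ) : IsCycleEdgeSet (Yedges φ i).val := by
  have hlevel : 6 * μ φ i ≠ 1 := by omega
  exact isCycleEdgeSet_val_of_toFinset_walkEdges (w := [V3.t i (6 * μ φ i),
    V3.f ((i + 1) % φ.n) 1, V3.f i (6 * μ φ i), V3.t ((i + 1) % φ.n) 1, V3.t i (6 * μ φ i)])
    (by simp) rfl (by simp [hlevel.symm]) (by simp [Yedges])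

lemma isCycleEdgeSet_literalEdges {φ : CNF3} {j : ℕ} {p : ℕ × Bool} (h : j ∈ occ φ p.1) :
    IsCycleEdgeSet (literalEdges φ j p).val := by
  have hlevel : 6 * posOf φ p.1 j - 3 ≠ 6 * posOf φ p.1 j - 2 := by
    have := posOf_pos h
    omega
  refine isCycleEdgeSet_val_of_toFinset_walkEdges
    (w := [litVertex p (6 * posOf φ p.1 j - 3), V3.c1 j, V3.a p.1 j, V3.c2 j,
      litVertex p (6 * posOf φ p.1 j - 2), V3.b p.1 j, litVertex p (6 * posOf φ p.1 j - 3)])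
    (by simp) rfl ?_ (by simp [literalEdges])
  rcases p with ⟨i, _ | _⟩ <;> simpa [litVertex] using hlevel.symm

/-! ### Edge-disjointness -/

/-- The variable `x_i` to which a vertex belongs, and `⊥` for the vertices of the clause paths. -/
def varIndex : V3 → WithBot ℕ
  | .t i _ | .z i _ | .f i _ | .a i _ | .b i _ => i
  | .cs | .c1 _ | .c2 _ => ⊥

/-- The clause `C_j` to which a vertex belongs, and `⊥` for all other vertices. -/
def clauseIndex : V3 → WithBot ℕ
  | .c1 j | .c2 j | .a _ j | .b _ j => j
  | .t _ _ | .z _ _ | .f _ _ | .cs => ⊥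

/-- The superscript `ℓ` of `t_i^ℓ`, `z_i^ℓ` and `f_i^ℓ`, with the junk value `0` elsewhere. -/
def level : V3 → ℕ
  | .t _ l | .z _ l | .f _ l => l
  | _ => 0

lemma varIndex_sup_of_mem_Xedges {φ : CNF3} {i : ℕ} {e : Sym2 V3} (he : e ∈ Xedges φ i) :
    (e.map varIndex).sup = i := by
  simp only [Xedges, Finset.mem_union, Finset.mem_image, Finset.mem_insert,
    Finset.mem_singleton] at he
  rcases he with (⟨l, -, rfl⟩ | ⟨l, -, rfl⟩) | rfl | rfl <;> simp [varIndex]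

lemma clauseIndex_sup_of_mem_Xedges {φ : CNF3} {i : ℕ} {e : Sym2 V3} (he : e ∈ Xedges φ i) :
    (e.map clauseIndex).sup = ⊥ := by
  simp only [Xedges, Finset.mem_union, Finset.mem_image, Finset.mem_insert,
    Finset.mem_singleton] at he
  rcases he with (⟨l, -, rfl⟩ | ⟨l, -, rfl⟩) | rfl | rfl <;> simp [clauseIndex]

lemma clauseIndex_sup_of_mem_Yedges {φ : CNF3} {i : ℕ} {e : Sym2 V3} (he : e ∈ Yedges φ i) :
    (e.map clauseIndex).sup = ⊥ := by
  simp only [Yedges, Finset.mem_insert, Finset.mem_singleton] at he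
  rcases he with rfl | rfl | rfl | rfl <;> simp [clauseIndex]

lemma varIndex_sup_of_mem_literalEdges {φ : CNF3} {j : ℕ} {p : ℕ × Bool} {e : Sym2 V3}
    (he : e ∈ literalEdges φ j p) : (e.map varIndex).sup = p.1 := by
  simp only [literalEdges, Finset.mem_insert, Finset.mem_singleton] at he
  rcases p with ⟨i, _ | _⟩ <;> rcases he with rfl | rfl | rfl | rfl | rfl | rfl <;>
    simp [varIndex, litVertex]

lemma clauseIndex_sup_of_mem_literalEdges {φ : CNF3} {j : ℕ} {p : ℕ × Bool} {e : Sym2 V3}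
    (he : e ∈ literalEdges φ j p) : (e.map clauseIndex).sup = j := by
  simp only [literalEdges, Finset.mem_insert, Finset.mem_singleton] at he
  rcases p with ⟨i, _ | _⟩ <;> rcases he with rfl | rfl | rfl | rfl | rfl | rfl <;>
    simp [clauseIndex, litVertex]

lemma level_le_of_mem_Xedges {φ : CNF3} {i : ℕ} {u v : V3} (he : s(u, v) ∈ Xedges φ i) :
    level u ≤ level v + 1 := by
  simp only [Xedges, Finset.mem_union, Finset.mem_image, Finset.mem_insert,
    Finset.mem_singleton, Sym2.eq_iff] at he
  rcases he with (⟨l, -, ⟨rfl, rfl⟩ | ⟨rfl, rfl⟩⟩ | ⟨l, -, ⟨rfl, rfl⟩ | ⟨rfl, rfl⟩⟩) |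
    (⟨rfl, rfl⟩ | ⟨rfl, rfl⟩) | (⟨rfl, rfl⟩ | ⟨rfl, rfl⟩) <;> simp only [level] <;> omega

lemma exists_level_of_mem_Yedges {φ : CNF3} {i : ℕ} {e : Sym2 V3} (he : e ∈ Yedges φ i) :
    ∃ u v, e = s(u, v) ∧ varIndex u = i ∧ level u = 6 * μ φ i ∧ level v = 1 := by
  simp only [Yedges, Finset.mem_insert, Finset.mem_singleton] at he
  rcases he with rfl | rfl | rfl | rfl
  exacts [⟨_, _, rfl, rfl, rfl, rfl⟩, ⟨_, _, Sym2.eq_swap, rfl, rfl, rfl⟩,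
    ⟨_, _, rfl, rfl, rfl, rfl⟩, ⟨_, _, Sym2.eq_swap, rfl, rfl, rfl⟩]

lemma disjoint_Xedges_Yedges {φ : CNF3} (i : ℕ) {i' : ℕ} (h : 0 < μ φ i') :
    Disjoint (Xedges φ i) (Yedges φ i') := by
  refine Finset.disjoint_left.2 fun e hX hY => ?_
  obtain ⟨u, v, rfl, -, hu, hv⟩ := exists_level_of_mem_Yedges hY
  have := level_le_of_mem_Xedges hX
  omega

lemma disjoint_Yedges (φ : CNF3) {i i' : ℕ} (hne : i ≠ i') :
    Disjoint (Yedges φ i) (Yedges φ i') := by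
  refine Finset.disjoint_left.2 fun e hY hY' => hne ?_
  obtain ⟨u, v, rfl, hu, hlu, -⟩ := exists_level_of_mem_Yedges hY
  obtain ⟨u', v', he, hu', hlu', hlv'⟩ := exists_level_of_mem_Yedges hY'
  rcases Sym2.eq_iff.1 he with ⟨rfl, rfl⟩ | ⟨rfl, rfl⟩
  · exact WithBot.coe_injective (hu.symm.trans hu')
  · omega

lemma Xedges_biUnion_mem_cycleSums {φ : CNF3} (hμ : ∀ i < φ.n, 0 < μ φ i) :
    ((Finset.range φ.n).biUnion (Xedges φ)).val ∈ cycleSums V3 :=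
  biUnion_val_mem_cycleSums
    (fun i hi => AddSubmonoid.subset_closure
      (isCycleEdgeSet_Xedges (hμ i (Finset.mem_range.1 hi))))
    (pairwiseDisjoint_of_forall_mem_eq _ WithBot.coe_injective.injOn
      fun _ _ _ => varIndex_sup_of_mem_Xedges)

lemma Yedges_biUnion_mem_cycleSums (φ : CNF3) :
    ((Finset.range φ.n).biUnion (Yedges φ)).val ∈ cycleSums V3 :=
  biUnion_val_mem_cycleSums
    (fun i _ => AddSubmonoid.subset_closure (isCycleEdgeSet_Yedges φ i))
    fun _ _ _ _ hne => disjoint_Yedges φ hne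

lemma literalEdges_biUnion_mem_cycleSums (φ : CNF3) :
    ((Finset.range φ.m).biUnion fun j => (φ.clause j).biUnion (literalEdges φ j)).val ∈
      cycleSums V3 := by
  refine biUnion_val_mem_cycleSums (fun j hj => ?_)
    (pairwiseDisjoint_of_forall_mem_eq (fun e => (e.map clauseIndex).sup)
      WithBot.coe_injective.injOn fun j _ e he => ?_)
  · rw [Finset.mem_range] at hj
    exact biUnion_val_mem_cycleSums
      (fun p hp => AddSubmonoid.subset_closure
        (isCycleEdgeSet_literalEdges (mem_occ_of_mem_clause hj hp)))
      (pairwiseDisjoint_of_forall_mem_eq _ (WithBot.coe_injective.comp_injOn (fst_injOn_clause hj))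
        fun _ _ _ => varIndex_sup_of_mem_literalEdges)
  · obtain ⟨p, -, hp⟩ := Finset.mem_biUnion.1 he
    exact clauseIndex_sup_of_mem_literalEdges hp

lemma E0_val_mem_cycleSums {φ : CNF3} (hμ : ∀ i < φ.n, 0 < μ φ i) :
    (E0 φ).val ∈ cycleSums V3 := by
  rw [E0_eq_union_literalEdges]
  refine union_val_mem_cycleSums (union_val_mem_cycleSums (Xedges_biUnion_mem_cycleSums hμ)
    (Yedges_biUnion_mem_cycleSums φ) ?_) (literalEdges_biUnion_mem_cycleSums φ) ?_
  · simp only [Finset.disjoint_biUnion_left, Finset.disjoint_biUnion_right, Finset.mem_range]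
    exact fun i' hi' i _ => disjoint_Xedges_Yedges i (hμ i' hi')
  · refine Finset.disjoint_left.2 fun e hXY hZ => ?_
    have hbot : (e.map clauseIndex).sup = ⊥ := by
      simp only [Finset.mem_union, Finset.mem_biUnion] at hXY
      rcases hXY with ⟨i, -, he⟩ | ⟨i, -, he⟩
      exacts [clauseIndex_sup_of_mem_Xedges he, clauseIndex_sup_of_mem_Yedges he]
    simp only [Finset.mem_biUnion] at hZ
    obtain ⟨j, -, p, -, he⟩ := hZ
    exact WithBot.coe_ne_bot ((clauseIndex_sup_of_mem_literalEdges he).symm.trans hbot)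

/-! ### Connectivity of `E_0` -/

lemma Xedges_subset_E0 {φ : CNF3} {i : ℕ} (hi : i < φ.n) : Xedges φ i ⊆ E0 φ :=
  (Finset.subset_biUnion_of_mem (Xedges φ) (Finset.mem_range.2 hi)).trans
    (Finset.subset_union_left.trans Finset.subset_union_left)

lemma Yedges_subset_E0 {φ : CNF3} {i : ℕ} (hi : i < φ.n) : Yedges φ i ⊆ E0 φ :=
  (Finset.subset_biUnion_of_mem (Yedges φ) (Finset.mem_range.2 hi)).trans
    (Finset.subset_union_right.trans Finset.subset_union_left)

lemma literalEdges_subset_E0 {φ : CNF3} {j : ℕ} (hj : j < φ.m) {p : ℕ × Bool}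
    (hp : p ∈ φ.clause j) : literalEdges φ j p ⊆ E0 φ := by
  rw [E0_eq_union_literalEdges]
  intro e he
  exact Finset.mem_union_right _ (Finset.mem_biUnion.2 ⟨j, Finset.mem_range.2 hj,
    Finset.mem_biUnion.2 ⟨p, hp, he⟩⟩)

lemma litVertex_mem_mVerts_Xedges {φ : CNF3} {i l : ℕ} (b : Bool) (hl : 1 ≤ l)
    (hlμ : l ≤ 6 * μ φ i) : litVertex (i, b) l ∈ mVerts (Xedges φ i).val := by
  rcases hlμ.eq_or_lt with rfl | hlt
  · refine ⟨s(V3.t i (6 * μ φ i), V3.f i (6 * μ φ i)), by simp [Xedges], ?_⟩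
    cases b <;> simp [litVertex]
  · refine ⟨s(litVertex (i, b) l, litVertex (i, b) (l + 1)), ?_, Sym2.mem_mk_left _ _⟩
    have hmem := Finset.mem_image_of_mem (fun l => s(litVertex (i, b) l, litVertex (i, b) (l + 1)))
      (Finset.mem_Ico.2 ⟨hl, hlt⟩)
    rw [Finset.mem_val, Xedges]
    cases b
    exacts [Finset.mem_union_left _ (Finset.mem_union_right _ hmem),
      Finset.mem_union_left _ (Finset.mem_union_left _ hmem)]

lemma reflTransGen_mAdj_E0_t_one {φ : CNF3} (hμ : ∀ i < φ.n, 0 < μ φ i) :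
    ∀ i < φ.n, Relation.ReflTransGen (mAdj (E0 φ).val) (V3.t 0 1) (V3.t i 1)
  | 0, _ => .refl
  | i + 1, hi => by
    have hi' : i < φ.n := i.lt_succ_self.trans hi
    have hX : Relation.ReflTransGen (mAdj (E0 φ).val) (V3.t i 1) (V3.t i (6 * μ φ i)) :=
      have := hμ i hi'
      (isCycleEdgeSet_Xedges this).reflTransGen_mAdj (Xedges_subset_E0 hi')
        (litVertex_mem_mVerts_Xedges true le_rfl (by omega))
        (litVertex_mem_mVerts_Xedges true (by omega) le_rfl)
    have hY : s(V3.t i (6 * μ φ i), V3.t (i + 1) 1) ∈ E0 φ :=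
      Yedges_subset_E0 hi' (by simp [Yedges, Nat.mod_eq_of_lt hi])
    exact ((reflTransGen_mAdj_E0_t_one hμ i hi').trans hX).tail hY

lemma reflTransGen_mAdj_E0_of_mem_mVerts_Xedges {φ : CNF3} (hμ : ∀ i < φ.n, 0 < μ φ i) {i : ℕ}
    (hi : i < φ.n) {v : V3} (hv : v ∈ mVerts (Xedges φ i).val) :
    Relation.ReflTransGen (mAdj (E0 φ).val) (V3.t 0 1) v :=
  have := hμ i hi
  (reflTransGen_mAdj_E0_t_one hμ i hi).trans
    ((isCycleEdgeSet_Xedges this).reflTransGen_mAdj (Xedges_subset_E0 hi)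
      (litVertex_mem_mVerts_Xedges true le_rfl (by omega)) hv)

lemma exists_mem_mVerts_Xedges_Yedges {φ : CNF3} {i : ℕ} (h : 0 < μ φ i) :
    ∃ u ∈ mVerts (Xedges φ i).val, u ∈ mVerts (Yedges φ i).val :=
  ⟨V3.t i (6 * μ φ i), litVertex_mem_mVerts_Xedges true (by omega) le_rfl,
    s(V3.t i (6 * μ φ i), V3.f ((i + 1) % φ.n) 1), by simp [Yedges], Sym2.mem_mk_left _ _⟩

lemma exists_mem_mVerts_Xedges_literalEdges {φ : CNF3} {j : ℕ} {p : ℕ × Bool}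
    (h : j ∈ occ φ p.1) :
    ∃ u ∈ mVerts (Xedges φ p.1).val, u ∈ mVerts (literalEdges φ j p).val := by
  have hpos := posOf_pos h
  have hle := posOf_le_μ φ p.1 j
  exact ⟨litVertex p (6 * posOf φ p.1 j - 3), litVertex_mem_mVerts_Xedges p.2 (by omega) (by omega),
    s(litVertex p (6 * posOf φ p.1 j - 3), V3.c1 j), by simp [literalEdges], Sym2.mem_mk_left _ _⟩

lemma mConnected_E0 {φ : CNF3} (hμ : ∀ i < φ.n, 0 < μ φ i) : mConnected (E0 φ).val := by
  refine mConnected_of_forall_reflTransGen (V3.t 0 1) ?_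
  rintro v ⟨e, he, hv⟩
  rw [E0_eq_union_literalEdges, Finset.mem_val] at he
  simp only [Finset.mem_union, Finset.mem_biUnion, Finset.mem_range] at he
  rcases he with (⟨i, hi, he⟩ | ⟨i, hi, he⟩) | ⟨j, hj, p, hp, he⟩
  · exact reflTransGen_mAdj_E0_of_mem_mVerts_Xedges hμ hi ⟨e, he, hv⟩
  · obtain ⟨u, huX, huY⟩ := exists_mem_mVerts_Xedges_Yedges (hμ i hi)
    exact (reflTransGen_mAdj_E0_of_mem_mVerts_Xedges hμ hi huX).trans
      ((isCycleEdgeSet_Yedges φ i).reflTransGen_mAdj (Yedges_subset_E0 hi) huY ⟨e, he, hv⟩)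
  · have hocc := mem_occ_of_mem_clause hj hp
    obtain ⟨u, huX, huZ⟩ := exists_mem_mVerts_Xedges_literalEdges hocc
    exact (reflTransGen_mAdj_E0_of_mem_mVerts_Xedges hμ (φ.var_lt j hj p hp) huX).trans
      ((isCycleEdgeSet_literalEdges hocc).reflTransGen_mAdj (literalEdges_subset_E0 hj hp) huZ
        ⟨e, he, hv⟩)

/-- In the HCPP instance `I_φ` produced by the construction from a 3-CNF formula `φ`
(in which every variable occurs in some clause), the multigraph `⟨G⟩E_0` induced by
the edge class `E_0` is Eulerian: it is connected and it is the union of pairwise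
edge-disjoint cycles, so every vertex of `⟨G⟩E_0` is balanced. -/
theorem E0_eulerian (φ : CNF3) (hμ : ∀ i < φ.n, 1 ≤ μ φ i) :
    mConnected (E0 φ).val ∧
    (∃ C : Multiset (Multiset (Sym2 V3)),
      C.sum = (E0 φ).val ∧ ∀ c ∈ C, IsCycleEdgeSet c) ∧
    ∀ v ∈ mVerts (E0 φ).val, Even (mDeg (E0 φ).val v) := by
  have hE := E0_val_mem_cycleSums hμ
  obtain ⟨C, hC, hsum⟩ := AddSubmonoid.exists_multiset_of_mem_closure hE
  exact ⟨mConnected_E0 hμ, ⟨C, hsum, hC⟩, fun v _ => even_mDeg_of_mem_cycleSums hE v⟩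

end HCPPFormal
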